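/- Suppose two runs of the CULO model start from the same initial strategy p^0 (i.e., p^0 = q_r(s^0) = q_{r'}(s'^0)), possibly with different exploration parameters r, r' > 0 and different proactivity sequences η^t, η'^t, and suppose both runs converge to UE strategies p₁*, p₂* ∈ P*. Then p₁* = p₂*: the limiting point of the CULO model is solely determined by the initial strategy p^0. -/

import Mathlib

/-!
Strict monotonicity of the link costs makes the equilibrium link flow unique, so the route flows of
the two limits differ by some `z = q ⊙ (q₁ - q₂)` with `Λ z = 0` and `Σ z = 0`. Along a run,
`log pᵗ` equals `-r sᵗ` up to a quantity depending only on the OD pair, and `s` moves in the range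
of `Λᵀ`; hence `⟨z, log pᵗ⟩` is conserved. It has the same value for both runs because they share
`p⁰`.

Let `t → ∞` in `⟨q ⊙ q₂, log pᵗ⟩ = ⟨q ⊙ q₁, log pᵗ⟩ - ⟨z, log p⁰⟩` along the first run. The right
side converges, since its terms with `q₁ₖ = 0` vanish. The left side would tend to `-∞` if `q₂` were
positive on a route that `q₁` does not use. So `supp q₂ ⊆ supp q₁` and `⟨z, log q₁⟩ = ⟨z, log p⁰⟩`.
By symmetry the supports agree and `⟨z, log q₁ - log q₂⟩ = 0`, which forces `q₁ = q₂` because `log`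
is strictly increasing.
-/

open Matrix Filter Finset Topology

noncomputable section

variable {A W K : Type*}

/-- OD-route incidence matrix `Σ`: each column is the standard unit vector at `od k`
(every route `k` serves exactly one OD pair, `od k`). -/
def Sig [DecidableEq W] (od : K → W) : Matrix W K ℝ :=
  Matrix.of fun w k => if od k = w then 1 else 0

/-- The strategy set `P = {p : p ≥ 0, Σ p = 1}`. -/
def Pset [Fintype K] [DecidableEq W] (od : K → W) : Set (K → ℝ) :=
  {p | (∀ k, 0 ≤ p k) ∧ ∀ w : W, (Sig od).mulVec p w = 1}

/-- `q = Σᵀ d`. -/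
def qvec [Fintype W] [DecidableEq W] (od : K → W) (d : W → ℝ) : K → ℝ :=
  (Sig od)ᵀ.mulVec d

/-- `bΛ = Λ · diag q`. -/
def bLam [Fintype K] [Fintype W] [DecidableEq W] [DecidableEq K]
    (Λ : Matrix A K ℝ) (od : K → W) (d : W → ℝ) : Matrix A K ℝ :=
  Λ * Matrix.diagonal (qvec od d)

/-- The link-flow set `X = {bΛ p : p ∈ P}`. -/
def Xset [Fintype K] [Fintype W] [DecidableEq W] [DecidableEq K]
    (Λ : Matrix A K ℝ) (od : K → W) (d : W → ℝ) : Set (A → ℝ) :=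
  (fun p => (bLam Λ od d).mulVec p) '' Pset od

/-- The route-cost map `c(p) = Λᵀ u(bΛ p)`. -/
def routeCost [Fintype A] [Fintype K] [Fintype W] [DecidableEq W] [DecidableEq K]
    (Λ : Matrix A K ℝ) (od : K → W) (d : W → ℝ)
    (u : (A → ℝ) → (A → ℝ)) : (K → ℝ) → (K → ℝ) :=
  fun p => Λᵀ.mulVec (u ((bLam Λ od d).mulVec p))

/-- The UE set `P*`: solutions of the variational inequality. -/
def UEset [Fintype A] [Fintype K] [Fintype W] [DecidableEq W] [DecidableEq K]
    (Λ : Matrix A K ℝ) (od : K → W) (d : W → ℝ)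
    (u : (A → ℝ) → (A → ℝ)) : Set (K → ℝ) :=
  {p | p ∈ Pset od ∧ ∀ p' ∈ Pset od, 0 ≤ routeCost Λ od d u p ⬝ᵥ (p' - p)}

/-- The logit map `q_r`. -/
def logit [Fintype K] [DecidableEq W] (od : K → W) (r : ℝ) (s : K → ℝ) : K → ℝ :=
  fun k => Real.exp (-r * s k) /
    ∑ k' ∈ Finset.univ.filter (fun k' => od k' = od k), Real.exp (-r * s k')

/-- The negative entropy `φ(p) = ∑ₖ qₖ pₖ log pₖ` (with `0·log 0 = 0`). -/
def negEnt [Fintype K] [Fintype W] [DecidableEq W] (od : K → W) (d : W → ℝ)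
    (p : K → ℝ) : ℝ :=
  ∑ k, qvec od d k * (p k * Real.log (p k))

/-- The KL divergence `D(p, p') = ∑ₖ qₖ pₖ (log pₖ − log p'ₖ)` (with `0·log 0 = 0`). -/
def KLdiv [Fintype K] [Fintype W] [DecidableEq W] (od : K → W) (d : W → ℝ)
    (p p' : K → ℝ) : ℝ :=
  ∑ k, qvec od d k * (p k * (Real.log (p k) - Real.log (p' k)))

section LogLimits

variable {ι β : Type*} [Fintype ι] {l : Filter β} {x y : β → ι → ℝ} {a b c w : ι → ℝ} {C L : ℝ}

theorem tendsto_dotProduct_log (hx : Tendsto x l (𝓝 a)) (hc : ∀ i, a i = 0 → c i = 0) :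
    Tendsto (fun t => c ⬝ᵥ (Real.log ∘ x t)) l (𝓝 (c ⬝ᵥ (Real.log ∘ a))) := by
  refine tendsto_finsetSum _ fun i _ => ?_
  by_cases hi : a i = 0
  · simpa only [hc i hi, zero_mul] using tendsto_const_nhds
  · exact ((tendsto_pi_nhds.mp hx i).log hi).const_mul _

theorem eq_zero_of_tendsto_dotProduct_log [l.NeBot] (hx : Tendsto x l (𝓝 a))
    (hpos : ∀ t i, 0 < x t i) (hc : ∀ i, 0 ≤ c i)
    (hL : Tendsto (fun t => c ⬝ᵥ (Real.log ∘ x t)) l (𝓝 L)) {i : ι} (hi : a i = 0) :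
    c i = 0 := by
  classical
  by_contra hci
  have hlog : Tendsto (fun t => Real.log (x t i)) l atBot :=
    Real.tendsto_log_nhdsGT_zero.comp <| tendsto_nhdsWithin_iff.mpr
      ⟨hi ▸ tendsto_pi_nhds.mp hx i, .of_forall fun t => hpos t i⟩
  have hrest : Tendsto (fun t => ∑ j ∈ univ.erase i, c j * x t j) l
      (𝓝 (∑ j ∈ univ.erase i, c j * a j)) :=
    tendsto_finsetSum _ fun j _ => (tendsto_pi_nhds.mp hx j).const_mul _
  have hbound : ∀ t, c ⬝ᵥ (Real.log ∘ x t) ≤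
      c i * Real.log (x t i) + ∑ j ∈ univ.erase i, c j * x t j := fun t => by
    rw [dotProduct, ← add_sum_erase _ _ (mem_univ i)]
    exact add_le_add_right (sum_le_sum fun j _ =>
      mul_le_mul_of_nonneg_left (Real.log_le_self (hpos t j).le) (hc j)) _
  have hatBot := (hlog.const_mul_atBot ((hc i).lt_of_ne' hci)).atBot_add hrest
  exact not_tendsto_nhds_of_tendsto_atBot (tendsto_atBot_mono hbound hatBot) _ hL

theorem eq_zero_of_dotProduct_log_const [l.NeBot] (hw : ∀ i, 0 < w i) (hb : ∀ i, 0 ≤ b i)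
    (hpos : ∀ t i, 0 < x t i) (hx : Tendsto x l (𝓝 a))
    (hC : ∀ t, (w * (a - b)) ⬝ᵥ (Real.log ∘ x t) = C) {i : ι} (hi : a i = 0) : b i = 0 := by
  have hsplit : ∀ t, (w * b) ⬝ᵥ (Real.log ∘ x t) = (w * a) ⬝ᵥ (Real.log ∘ x t) - C := fun t => by
    rw [← hC t, mul_sub, sub_dotProduct, sub_sub_cancel]
  have hconv : Tendsto (fun t => (w * b) ⬝ᵥ (Real.log ∘ x t)) l
      (𝓝 ((w * a) ⬝ᵥ (Real.log ∘ a) - C)) := by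
    simp only [hsplit]
    exact (tendsto_dotProduct_log hx fun j hj => by simp [hj]).sub_const C
  have hwb : w i * b i = 0 := eq_zero_of_tendsto_dotProduct_log hx hpos
    (fun j => mul_nonneg (hw j).le (hb j)) hconv hi
  exact (mul_eq_zero.mp hwb).resolve_left (hw i).ne'

theorem dotProduct_log_limit_eq [l.NeBot] (hc : ∀ i, a i = 0 → c i = 0) (hx : Tendsto x l (𝓝 a))
    (hC : ∀ t, c ⬝ᵥ (Real.log ∘ x t) = C) : c ⬝ᵥ (Real.log ∘ a) = C :=
  tendsto_nhds_unique (tendsto_dotProduct_log hx hc)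
    (tendsto_const_nhds.congr fun t => (hC t).symm)

theorem sub_mul_log_sub_log_pos {s t : ℝ} (hs : 0 < s) (ht : 0 < t) (hst : s ≠ t) :
    0 < (s - t) * (Real.log s - Real.log t) := by
  rcases hst.lt_or_gt with h | h
  · exact mul_pos_of_neg_of_neg (sub_neg.mpr h) (sub_neg.mpr (Real.log_lt_log hs h))
  · exact mul_pos (sub_pos.mpr h) (sub_pos.mpr (Real.log_lt_log ht h))

theorem eq_of_dotProduct_log_eq (hw : ∀ i, 0 < w i) (ha : ∀ i, 0 ≤ a i) (hb : ∀ i, 0 ≤ b i)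
    (hab : ∀ i, a i = 0 ↔ b i = 0)
    (h : (w * (a - b)) ⬝ᵥ (Real.log ∘ a) = (w * (a - b)) ⬝ᵥ (Real.log ∘ b)) : a = b := by
  have hpos : ∀ i, a i ≠ b i → 0 < w i * ((a i - b i) * (Real.log (a i) - Real.log (b i))) :=
    fun i hne => by
      have hai : a i ≠ 0 := fun h0 => hne (h0.trans ((hab i).mp h0).symm)
      have hbi : b i ≠ 0 := fun h0 => hai ((hab i).mpr h0)
      exact mul_pos (hw i)
        (sub_mul_log_sub_log_pos ((ha i).lt_of_ne' hai) ((hb i).lt_of_ne' hbi) hne)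
  have hnonneg : ∀ i ∈ univ, 0 ≤ w i * ((a i - b i) * (Real.log (a i) - Real.log (b i))) :=
    fun i _ => by
      by_cases hi : a i = b i
      · simp [hi]
      · exact (hpos i hi).le
  have hsum : ∑ i, w i * ((a i - b i) * (Real.log (a i) - Real.log (b i))) = 0 := by
    rw [← sub_eq_zero, ← dotProduct_sub] at h
    simpa [dotProduct, mul_assoc] using h
  funext i
  by_contra hi
  exact (hpos i hi).ne' ((sum_eq_zero_iff_of_nonneg hnonneg).mp hsum i (mem_univ i))

theorem eq_of_tendsto_of_dotProduct_log_const [l.NeBot] (hw : ∀ i, 0 < w i)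
    (hxpos : ∀ t i, 0 < x t i) (hypos : ∀ t i, 0 < y t i)
    (hx : Tendsto x l (𝓝 a)) (hy : Tendsto y l (𝓝 b))
    (hxC : ∀ t, (w * (a - b)) ⬝ᵥ (Real.log ∘ x t) = C)
    (hyC : ∀ t, (w * (a - b)) ⬝ᵥ (Real.log ∘ y t) = C) : a = b := by
  have ha : ∀ i, 0 ≤ a i := ge_of_tendsto' hx fun t i => (hxpos t i).le
  have hb : ∀ i, 0 ≤ b i := ge_of_tendsto' hy fun t i => (hypos t i).le
  have hyC' : ∀ t, (w * (b - a)) ⬝ᵥ (Real.log ∘ y t) = -C := fun t => by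
    rw [← neg_sub a b, mul_neg, neg_dotProduct, hyC]
  have hab : ∀ i, a i = 0 ↔ b i = 0 := fun i =>
    ⟨eq_zero_of_dotProduct_log_const hw hb hxpos hx hxC,
      eq_zero_of_dotProduct_log_const hw ha hypos hy hyC'⟩
  have hlim_a : (w * (a - b)) ⬝ᵥ (Real.log ∘ a) = C :=
    dotProduct_log_limit_eq (fun i hi => by simp [hi, (hab i).mp hi]) hx hxC
  have hlim_b : (w * (a - b)) ⬝ᵥ (Real.log ∘ b) = C :=
    dotProduct_log_limit_eq (fun i hi => by simp [hi, (hab i).mpr hi]) hy hyC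
  exact eq_of_dotProduct_log_eq hw ha hb hab (hlim_a.trans hlim_b.symm)

end LogLimits

section Strategies

variable [DecidableEq W] {od : K → W}

theorem qvec_apply [Fintype W] (od : K → W) (d : W → ℝ) (k : K) : qvec od d k = d (od k) := by
  simp [qvec, Sig, mulVec, dotProduct]

variable [Fintype K]

theorem Sig_mulVec_apply (od : K → W) (p : K → ℝ) (w : W) :
    (Sig od *ᵥ p) w = ∑ k with od k = w, p k := by
  simp [Sig, mulVec, dotProduct, sum_filter]

theorem Sig_mulVec_qvec_mul [Fintype W] (od : K → W) (d : W → ℝ) (p : K → ℝ) :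
    Sig od *ᵥ (qvec od d * p) = d * (Sig od *ᵥ p) := by
  funext w
  simp only [Sig_mulVec_apply, Pi.mul_apply, qvec_apply, mul_sum]
  exact sum_congr rfl fun k hk => by rw [(mem_filter.mp hk).2]

theorem Sig_mulVec_sub_eq_zero {p p' : K → ℝ} (hp : p ∈ Pset od) (hp' : p' ∈ Pset od) :
    Sig od *ᵥ (p - p') = 0 := by
  funext w
  rw [mulVec_sub, Pi.sub_apply, hp.2, hp'.2, sub_self, Pi.zero_apply]

-- `P` is a product over OD pairs, so the variational inequality over it splits by OD pair and may
-- then be reweighted by the demands, which turns it into one about link flows.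
theorem ite_mem_Pset {p p' : K → ℝ} (hp : p ∈ Pset od) (hp' : p' ∈ Pset od) (w : W) :
    (fun k => if od k = w then p' k else p k) ∈ Pset od := by
  refine ⟨fun k => by beta_reduce; split_ifs; exacts [hp'.1 k, hp.1 k], fun v => ?_⟩
  by_cases hv : v = w
  · rw [← hp'.2 v]
    simp only [Sig_mulVec_apply]
    exact sum_congr rfl fun k hk => if_pos ((mem_filter.mp hk).2.trans hv)
  · rw [← hp.2 v]
    simp only [Sig_mulVec_apply]
    exact sum_congr rfl fun k hk => if_neg ((mem_filter.mp hk).2 ▸ hv)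

theorem sum_od_mul_sub_nonneg {c p p' : K → ℝ} (hp : p ∈ Pset od)
    (hvi : ∀ p' ∈ Pset od, 0 ≤ c ⬝ᵥ (p' - p)) (hp' : p' ∈ Pset od) (w : W) :
    0 ≤ ∑ k with od k = w, c k * (p' k - p k) := by
  rw [sum_filter]
  refine (hvi _ (ite_mem_Pset hp hp' w)).trans_eq (sum_congr rfl fun k _ => ?_)
  rw [Pi.sub_apply]
  split_ifs
  · rfl
  · rw [sub_self, mul_zero]

theorem dotProduct_qvec_mul_sub_nonneg [Fintype W] {d : W → ℝ} (hd : ∀ w, 0 ≤ d w)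
    {c p p' : K → ℝ} (hp : p ∈ Pset od) (hvi : ∀ p' ∈ Pset od, 0 ≤ c ⬝ᵥ (p' - p))
    (hp' : p' ∈ Pset od) : 0 ≤ c ⬝ᵥ (qvec od d * (p' - p)) := by
  have hsplit : c ⬝ᵥ (qvec od d * (p' - p)) =
      ∑ w, d w * ∑ k with od k = w, c k * (p' k - p k) := by
    simp only [dotProduct, ← sum_fiberwise univ od (fun k => c k * _), mul_sum]
    refine sum_congr rfl fun w _ => sum_congr rfl fun k hk => ?_
    rw [Pi.mul_apply, Pi.sub_apply, qvec_apply, (mem_filter.mp hk).2]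
    ring
  rw [hsplit]
  exact sum_nonneg fun w _ => mul_nonneg (hd w) (sum_od_mul_sub_nonneg hp hvi hp' w)

end Strategies

section Logit

variable [Fintype K] [DecidableEq W]

theorem sum_exp_od_pos (od : K → W) (f : K → ℝ) (k : K) :
    0 < ∑ k' with od k' = od k, Real.exp (f k') :=
  sum_pos (fun _ _ => Real.exp_pos _) ⟨k, by simp⟩

theorem logit_pos (od : K → W) (r : ℝ) (s : K → ℝ) (k : K) : 0 < logit od r s k :=
  div_pos (Real.exp_pos _) (sum_exp_od_pos od _ k)

theorem log_logit (od : K → W) (r : ℝ) (s : K → ℝ) (k : K) :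
    Real.log (logit od r s k) =
      -r * s k - Real.log (∑ k' with od k' = od k, Real.exp (-r * s k')) := by
  rw [logit, Real.log_div (Real.exp_pos _).ne' (sum_exp_od_pos od _ k).ne', Real.log_exp]

theorem dotProduct_comp_od_eq_zero {od : K → W} {z : K → ℝ} (hz : Sig od *ᵥ z = 0) (g : W → ℝ) :
    z ⬝ᵥ (g ∘ od) = 0 := by
  rw [dotProduct, ← sum_fiberwise_of_maps_to fun k _ => mem_image_of_mem od (mem_univ k)]
  refine sum_eq_zero fun w _ => ?_
  calc ∑ k with od k = w, z k * (g ∘ od) k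
      = (∑ k with od k = w, z k) * g w := by
        rw [sum_mul]
        exact sum_congr rfl fun k hk => by rw [Function.comp_apply, (mem_filter.mp hk).2]
    _ = 0 := by rw [← Sig_mulVec_apply, hz, Pi.zero_apply, zero_mul]

theorem dotProduct_log_logit {od : K → W} {z : K → ℝ} (hz : Sig od *ᵥ z = 0) (r : ℝ) (s : K → ℝ) :
    z ⬝ᵥ (Real.log ∘ logit od r s) = -r * (z ⬝ᵥ s) := by
  have hlog : Real.log ∘ logit od r s =
      -r • s - (fun w => Real.log (∑ k' with od k' = w, Real.exp (-r * s k'))) ∘ od :=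
    funext fun k => log_logit od r s k
  rw [hlog, dotProduct_sub, dotProduct_comp_od_eq_zero hz, sub_zero, dotProduct_smul, smul_eq_mul]

end Logit

section Network

variable [Fintype W] [Fintype K] [DecidableEq W] [DecidableEq K]
  {Λ : Matrix A K ℝ} {od : K → W} {d : W → ℝ} {u : (A → ℝ) → A → ℝ}

theorem bLam_mulVec (Λ : Matrix A K ℝ) (od : K → W) (d : W → ℝ) (p : K → ℝ) :
    bLam Λ od d *ᵥ p = Λ *ᵥ (qvec od d * p) := by
  rw [bLam, ← mulVec_mulVec]
  congr 1
  funext k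
  rw [mulVec_diagonal, Pi.mul_apply]

variable [Fintype A]

theorem routeCost_dotProduct (Λ : Matrix A K ℝ) (od : K → W) (d : W → ℝ)
    (u : (A → ℝ) → A → ℝ) (p z : K → ℝ) :
    routeCost Λ od d u p ⬝ᵥ z = u (bLam Λ od d *ᵥ p) ⬝ᵥ Λ *ᵥ z := by
  rw [routeCost, mulVec_transpose, dotProduct_mulVec]

theorem linkCost_dotProduct_sub_nonneg (hd : ∀ w, 0 ≤ d w) {p p' : K → ℝ}
    (hp : p ∈ UEset Λ od d u) (hp' : p' ∈ Pset od) :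
    0 ≤ u (bLam Λ od d *ᵥ p) ⬝ᵥ (bLam Λ od d *ᵥ p' - bLam Λ od d *ᵥ p) := by
  rw [← mulVec_sub, bLam_mulVec Λ od d (p' - p), ← routeCost_dotProduct]
  exact dotProduct_qvec_mul_sub_nonneg hd hp.1 hp.2 hp'

theorem linkFlow_eq_of_mem_UEset (hd : ∀ w, 0 ≤ d w)
    (hmono : ∀ x ∈ Xset Λ od d, ∀ x' ∈ Xset Λ od d, x ≠ x' → 0 < (u x - u x') ⬝ᵥ (x - x'))
    {p p' : K → ℝ} (hp : p ∈ UEset Λ od d u) (hp' : p' ∈ UEset Λ od d u) :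
    bLam Λ od d *ᵥ p = bLam Λ od d *ᵥ p' := by
  by_contra hne
  have hstrict := hmono _ ⟨p, hp.1, rfl⟩ _ ⟨p', hp'.1, rfl⟩ hne
  have hvi := linkCost_dotProduct_sub_nonneg hd hp hp'.1
  have hvi' := linkCost_dotProduct_sub_nonneg hd hp' hp.1
  simp only [sub_dotProduct, dotProduct_sub] at hstrict hvi hvi'
  linarith

/-- A run of the CULO model with exploration parameter `r` and proactivity parameters `η`:
`s t` is the valuation and `p t` the strategy on day `t`. The step from day `t` to day `t + 1` uses
`η (t + 1)`, as in the paper, so `η 0` is never read. -/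
structure IsCULORun (Λ : Matrix A K ℝ) (od : K → W) (d : W → ℝ) (u : (A → ℝ) → A → ℝ)
    (r : ℝ) (η : ℕ → ℝ) (s p : ℕ → K → ℝ) : Prop where
  valuation_succ : ∀ t, s (t + 1) = s t + η (t + 1) • routeCost Λ od d u (p t)
  strategy_eq : ∀ t, p t = logit od r (s t)

namespace IsCULORun

variable {r : ℝ} {η : ℕ → ℝ} {s p : ℕ → K → ℝ} {z : K → ℝ}

theorem strategy_pos (h : IsCULORun Λ od d u r η s p) (t : ℕ) (k : K) : 0 < p t k := by
  rw [h.strategy_eq]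
  exact logit_pos od r (s t) k

theorem dotProduct_valuation_eq (h : IsCULORun Λ od d u r η s p) (hΛz : Λ *ᵥ z = 0) (t : ℕ) :
    z ⬝ᵥ s t = z ⬝ᵥ s 0 := by
  induction t with
  | zero => rfl
  | succ t ih =>
    rw [h.valuation_succ, dotProduct_add, dotProduct_smul, dotProduct_comm z (routeCost Λ od d u _),
      routeCost_dotProduct, hΛz, dotProduct_zero, smul_zero, add_zero, ih]

theorem dotProduct_log_strategy_eq (h : IsCULORun Λ od d u r η s p) (hΛz : Λ *ᵥ z = 0)
    (hSz : Sig od *ᵥ z = 0) (t : ℕ) :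
    z ⬝ᵥ (Real.log ∘ p t) = z ⬝ᵥ (Real.log ∘ p 0) := by
  rw [h.strategy_eq t, h.strategy_eq 0, dotProduct_log_logit hSz, dotProduct_log_logit hSz,
    h.dotProduct_valuation_eq hΛz]

end IsCULORun

theorem statement8_general (hd : ∀ w, 0 < d w)
    (hmono : ∀ x ∈ Xset Λ od d, ∀ x' ∈ Xset Λ od d, x ≠ x' → 0 < (u x - u x') ⬝ᵥ (x - x'))
    {r₁ r₂ : ℝ} {η₁ η₂ : ℕ → ℝ} {s₁ s₂ p₁ p₂ : ℕ → K → ℝ}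
    (run₁ : IsCULORun Λ od d u r₁ η₁ s₁ p₁) (run₂ : IsCULORun Λ od d u r₂ η₂ s₂ p₂)
    (hinit : p₁ 0 = p₂ 0)
    {q₁ q₂ : K → ℝ} (hq₁ : q₁ ∈ UEset Λ od d u) (hq₂ : q₂ ∈ UEset Λ od d u)
    (hconv₁ : Tendsto p₁ atTop (𝓝 q₁)) (hconv₂ : Tendsto p₂ atTop (𝓝 q₂)) :
    q₁ = q₂ := by
  have hΛz : Λ *ᵥ (qvec od d * (q₁ - q₂)) = 0 := by
    rw [← bLam_mulVec, mulVec_sub, sub_eq_zero]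
    exact linkFlow_eq_of_mem_UEset (fun w => (hd w).le) hmono hq₁ hq₂
  have hSz : Sig od *ᵥ (qvec od d * (q₁ - q₂)) = 0 := by
    rw [Sig_mulVec_qvec_mul, Sig_mulVec_sub_eq_zero hq₁.1 hq₂.1, mul_zero]
  have hq : ∀ k, 0 < qvec od d k := fun k => qvec_apply od d k ▸ hd (od k)
  refine eq_of_tendsto_of_dotProduct_log_const hq run₁.strategy_pos run₂.strategy_pos
    hconv₁ hconv₂ (run₁.dotProduct_log_strategy_eq hΛz hSz) fun t => ?_
  rw [run₂.dotProduct_log_strategy_eq hΛz hSz, hinit]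

end Network

/-- Corollary 1: two runs of the CULO model started from the same
initial strategy `p⁰` (possibly with different exploration parameters and proactivity
sequences) that both converge to UE strategies have the same limit: the limiting
point of CULO is solely determined by the initial strategy. -/
theorem statement8
    [Fintype A] [Fintype W] [Fintype K] [DecidableEq W] [DecidableEq K]
    (Λ : Matrix A K ℝ) (od : K → W) (d : W → ℝ)
    (hΛ : ∀ a k, Λ a k = 0 ∨ Λ a k = 1)
    (hd : ∀ w, 0 < d w)
    (u : (A → ℝ) → (A → ℝ))
    (hu : ContDiffOn ℝ 1 u (Xset Λ od d))
    (hnonneg : ∀ x ∈ Xset Λ od d, ∀ a, 0 ≤ u x a)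
    (hmono : ∀ x ∈ Xset Λ od d, ∀ x' ∈ Xset Λ od d, x ≠ x' →
      0 < (u x - u x') ⬝ᵥ (x - x'))
    (r₁ r₂ : ℝ) (hr₁ : 0 < r₁) (hr₂ : 0 < r₂)
    (η₁ η₂ : ℕ → ℝ) (hη₁ : ∀ t, 0 < η₁ t) (hη₂ : ∀ t, 0 < η₂ t)
    (s₁ s₂ : ℕ → K → ℝ) (p₁ p₂ : ℕ → K → ℝ)
    (hsdyn₁ : ∀ t, s₁ (t + 1) = s₁ t + η₁ (t + 1) • routeCost Λ od d u (p₁ t))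
    (hpdyn₁ : ∀ t, p₁ t = logit od r₁ (s₁ t))
    (hsdyn₂ : ∀ t, s₂ (t + 1) = s₂ t + η₂ (t + 1) • routeCost Λ od d u (p₂ t))
    (hpdyn₂ : ∀ t, p₂ t = logit od r₂ (s₂ t))
    (hinit : p₁ 0 = p₂ 0)
    (q₁ q₂ : K → ℝ) (hq₁ : q₁ ∈ UEset Λ od d u) (hq₂ : q₂ ∈ UEset Λ od d u)
    (hconv₁ : Tendsto p₁ atTop (nhds q₁))
    (hconv₂ : Tendsto p₂ atTop (nhds q₂)) :
    q₁ = q₂ := by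
  exact statement8_general hd hmono ⟨hsdyn₁, hpdyn₁⟩ ⟨hsdyn₂, hpdyn₂⟩ hinit hq₁ hq₂ hconv₁ hconv₂
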